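/- arXiv:1503.03155 — 3 statements merged into one kernel-verified Lean document; each statement's English description precedes it below -/
import Mathlib

section
/- (Local Cheeger inequality) Let G = (V,E) be a finite undirected simple graph in which every vertex has positive degree, and let S be a nonempty subset of V with vol(S) ≤ vol(G)/2. Then (1/2)·Φ*(S)² ≤ λ_S ≤ Φ*(S), where λ_S is the smallest Dirichlet eigenvalue of S and Φ*(S) is the local Cheeger ratio of S. -/
/-!
Writing a vector on `S` as `x = D^{1/2} f`, with `f` extended by zero to `V`, turns the Rayleigh
quotient of `L_S` into `R(f) = ½ ∑ (f u - f v)² / ∑ d_u f(u)²`, the upper sum running over ordered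
adjacent pairs. Hence `λ_S` is the largest `c` with `c ≤ R(f)` for all nonzero `f` vanishing off
`S` (`le_dirichletEig_iff`).

Since `vol(S) ≤ vol(G)/2`, every `T ⊆ S` has `Φ(T) = |∂T| / vol(T)` (`cheegerRatio_eq`), which is
`R(1_T)`; this gives the upper bound. For the lower bound, the isoperimetric inequality
`|∂T| ≥ Φ* vol(T)` is integrated over the level sets of `f²` (`coarea`) to give
`∑ |f(u)² - f(v)²| ≥ 2 Φ* ∑ d_u f(u)²`, and Cauchy–Schwarz bounds the left side above by
`(∑ (f u - f v)²)^{1/2} (4 ∑ d_u f(u)²)^{1/2}` (`sq_sum_abs_le`).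
-/

open Matrix Finset

/-- The volume of a vertex subset: the sum of the degrees of its vertices. -/
def vol {V : Type*} [Fintype V] (G : SimpleGraph V) [DecidableRel G.Adj] (S : Finset V) : ℕ :=
  ∑ v ∈ S, G.degree v

/-- The number of (ordered) boundary edges of `S`: pairs `u ∼ v` with `u ∈ S`, `v ∉ S`. -/
def edgeBoundary {V : Type*} [Fintype V] [DecidableEq V] (G : SimpleGraph V)
    [DecidableRel G.Adj] (S : Finset V) : ℕ :=
  (Finset.univ.filter (fun p : V × V => G.Adj p.1 p.2 ∧ p.1 ∈ S ∧ p.2 ∉ S)).card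

/-- The Cheeger ratio `Φ(S) = |∂(S)| / min(vol(S), vol(V∖S))`. -/
noncomputable def cheegerRatio {V : Type*} [Fintype V] [DecidableEq V] (G : SimpleGraph V)
    [DecidableRel G.Adj] (S : Finset V) : ℝ :=
  (edgeBoundary G S : ℝ) / min (vol G S : ℝ) (vol G Sᶜ : ℝ)

/-- The local Cheeger ratio `Φ*(S) = min_{∅ ≠ T ⊆ S} Φ(T)`. -/
noncomputable def localCheeger {V : Type*} [Fintype V] [DecidableEq V] (G : SimpleGraph V)
    [DecidableRel G.Adj] (S : Finset V) : ℝ :=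
  sInf {x : ℝ | ∃ T : Finset V, T.Nonempty ∧ T ⊆ S ∧ x = cheegerRatio G T}

/-- The restricted Laplacian `L_S = D_S^{−1/2} (D_S − A_S) D_S^{−1/2}`. -/
noncomputable def dirichletMatrix {V : Type*} [Fintype V] [DecidableEq V] (G : SimpleGraph V)
    [DecidableRel G.Adj] (S : Finset V) : Matrix S S ℝ :=
  fun i j => (Real.sqrt (G.degree i.1))⁻¹ *
    ((if (i : V) = (j : V) then (G.degree i.1 : ℝ) else 0) -
      (if G.Adj i.1 j.1 then (1 : ℝ) else 0)) * (Real.sqrt (G.degree j.1))⁻¹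

/-- The smallest Dirichlet eigenvalue `λ_S` of `S`: the smallest eigenvalue of `L_S`. -/
noncomputable def dirichletEig {V : Type*} [Fintype V] [DecidableEq V] (G : SimpleGraph V)
    [DecidableRel G.Adj] (S : Finset V) : ℝ :=
  sInf (spectrum ℝ (dirichletMatrix G S))

/-! ### Spectral bounds and quadratic forms -/

section Spectral

/-- A spectral lower bound for a symmetric matrix is a lower bound on its quadratic form,
because both say that `A - c • 1` is positive semidefinite. -/
lemma forall_spectrum_ge_iff {n : Type*} [Fintype n] [DecidableEq n] {A : Matrix n n ℝ}
    (hA : A.IsHermitian) (c : ℝ) :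
    (∀ μ ∈ spectrum ℝ A, c ≤ μ) ↔ ∀ x : n → ℝ, c * (x ⬝ᵥ x) ≤ x ⬝ᵥ (A *ᵥ x) := by
  have hB : (A - algebraMap ℝ (Matrix n n ℝ) c).IsHermitian := by
    refine hA.sub ?_
    rw [Matrix.algebraMap_eq_diagonal]
    exact Matrix.isHermitian_diagonal _
  have hquad : ∀ x : n → ℝ, x ⬝ᵥ ((A - algebraMap ℝ (Matrix n n ℝ) c) *ᵥ x)
      = x ⬝ᵥ (A *ᵥ x) - c * (x ⬝ᵥ x) := by
    intro x
    rw [Algebra.algebraMap_eq_smul_one, Matrix.sub_mulVec, Matrix.smul_mulVec,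
      Matrix.one_mulVec, dotProduct_sub, dotProduct_smul, smul_eq_mul]
  have h1 := Matrix.posSemidef_iff_isHermitian_and_spectrum_nonneg
    (A := A - algebraMap ℝ (Matrix n n ℝ) c)
  have h2 := Matrix.posSemidef_iff_dotProduct_mulVec
    (M := A - algebraMap ℝ (Matrix n n ℝ) c)
  simp only [hB, true_and] at h1 h2
  rw [h1, ← spectrum.sub_singleton_eq] at h2
  constructor
  · intro h x
    have := h2.1 (by
      rintro _ ⟨μ, hμ, _, rfl, rfl⟩
      exact sub_nonneg.2 (h μ hμ)) x
    rw [star_trivial, hquad] at this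
    linarith
  · intro h μ hμ
    have := h2.2 (fun x => by rw [star_trivial, hquad]; linarith [h x])
      (Set.sub_mem_sub hμ rfl)
    exact sub_nonneg.1 this

lemma le_sInf_spectrum_iff {n : Type*} [Fintype n] [DecidableEq n] [Nonempty n]
    {A : Matrix n n ℝ} (hA : A.IsHermitian) (c : ℝ) :
    c ≤ sInf (spectrum ℝ A) ↔ ∀ x : n → ℝ, c * (x ⬝ᵥ x) ≤ x ⬝ᵥ (A *ᵥ x) := by
  have hspec := hA.spectrum_real_eq_range_eigenvalues
  rw [← forall_spectrum_ge_iff hA]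
  refine le_csInf_iff ?_ ?_
  · rw [hspec]; exact (Set.finite_range _).bddBelow
  · rw [hspec]; exact Set.range_nonempty _

end Spectral

/-! ### Dirichlet energy and isoperimetry -/

section Energy

variable {V : Type*} [Fintype V] (G : SimpleGraph V) [DecidableRel G.Adj]

/-- The real-valued adjacency indicator of `G`. -/
def adjWeight (u v : V) : ℝ := if G.Adj u v then 1 else 0

lemma adjWeight_nonneg (u v : V) : 0 ≤ adjWeight G u v := by
  unfold adjWeight; split_ifs <;> norm_num

lemma adjWeight_comm (u v : V) : adjWeight G u v = adjWeight G v u := by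
  simp only [adjWeight, G.adj_comm]

lemma sum_adjWeight (u : V) : ∑ v, adjWeight G u v = G.degree u := by
  simp only [adjWeight, Finset.sum_boole]
  rw [← G.card_neighborFinset_eq_degree, G.neighborFinset_eq_filter]

lemma sum_adjWeight_mul_left (h : V → ℝ) :
    ∑ u, ∑ v, adjWeight G u v * h u = ∑ u, (G.degree u : ℝ) * h u := by
  simp only [← Finset.sum_mul, sum_adjWeight]

lemma sum_adjWeight_mul_right (h : V → ℝ) :
    ∑ u, ∑ v, adjWeight G u v * h v = ∑ u, (G.degree u : ℝ) * h u := by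
  rw [Finset.sum_comm, ← sum_adjWeight_mul_left]
  simp only [adjWeight_comm]

/-- The Dirichlet energy, as a sum over ordered pairs, so that every edge is counted twice. -/
def energy (f : V → ℝ) : ℝ := ∑ u, ∑ v, adjWeight G u v * (f u - f v) ^ 2

/-- The degree-weighted squared `ℓ²` norm. -/
def degNormSq (f : V → ℝ) : ℝ := ∑ u, (G.degree u : ℝ) * f u ^ 2

lemma energy_nonneg (f : V → ℝ) : 0 ≤ energy G f :=
  Finset.sum_nonneg fun u _ => Finset.sum_nonneg fun v _ =>
    mul_nonneg (adjWeight_nonneg G u v) (sq_nonneg _)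

lemma degNormSq_nonneg (f : V → ℝ) : 0 ≤ degNormSq G f :=
  Finset.sum_nonneg fun u _ => by positivity

lemma energy_eq (f : V → ℝ) :
    energy G f = 2 * (degNormSq G f - ∑ u, ∑ v, f u * adjWeight G u v * f v) := by
  have h1 := sum_adjWeight_mul_left G (fun u => f u ^ 2)
  have h2 := sum_adjWeight_mul_right G (fun u => f u ^ 2)
  have h3 : energy G f = ∑ u, ∑ v, adjWeight G u v * f u ^ 2
      + ∑ u, ∑ v, adjWeight G u v * f v ^ 2
      - 2 * ∑ u, ∑ v, f u * adjWeight G u v * f v := by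
    simp only [energy, Finset.mul_sum, ← Finset.sum_add_distrib, ← Finset.sum_sub_distrib]
    exact Finset.sum_congr rfl fun u _ => Finset.sum_congr rfl fun v _ => by ring
  rw [h3, h1, h2, degNormSq]; ring

/-- The Cauchy–Schwarz half of Cheeger's argument, applied to
`|f u ^ 2 - f v ^ 2| = |f u - f v| * |f u + f v|`. -/
lemma sq_sum_abs_le (f : V → ℝ) :
    (∑ u, ∑ v, adjWeight G u v * |f u ^ 2 - f v ^ 2|) ^ 2
      ≤ energy G f * (4 * degNormSq G f) := by
  have hplus : ∑ u, ∑ v, adjWeight G u v * (f u + f v) ^ 2 ≤ 4 * degNormSq G f := by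
    have h1 := sum_adjWeight_mul_left G (fun u => f u ^ 2)
    have h2 := sum_adjWeight_mul_right G (fun u => f u ^ 2)
    have h3 : ∑ u, ∑ v, adjWeight G u v * (f u + f v) ^ 2
        = 2 * ∑ u, ∑ v, adjWeight G u v * f u ^ 2
          + 2 * ∑ u, ∑ v, adjWeight G u v * f v ^ 2 - energy G f := by
      simp only [energy, Finset.mul_sum, ← Finset.sum_add_distrib, ← Finset.sum_sub_distrib]
      exact Finset.sum_congr rfl fun u _ => Finset.sum_congr rfl fun v _ => by ring
    have := energy_nonneg G f
    rw [h3, h1, h2, degNormSq]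
    linarith
  refine le_trans ?_ (mul_le_mul_of_nonneg_left hplus (energy_nonneg G f))
  simp only [energy, ← Fintype.sum_prod_type']
  refine Finset.sum_sq_le_sum_mul_sum_of_sq_le_mul _ (fun p _ => ?_) (fun p _ => ?_)
    (fun p _ => ?_)
  · exact mul_nonneg (adjWeight_nonneg G _ _) (sq_nonneg _)
  · exact mul_nonneg (adjWeight_nonneg G _ _) (sq_nonneg _)
  · refine le_of_eq ?_
    rw [mul_pow, sq_abs]; ring

variable [DecidableEq V]

/-- The ordered sum counts every boundary edge once in each direction. -/
lemma sum_abs_indicator (T : Finset V) :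
    ∑ u, ∑ v, adjWeight G u v * |(if u ∈ T then (1 : ℝ) else 0) - (if v ∈ T then 1 else 0)|
      = 2 * edgeBoundary G T := by
  have hb : (edgeBoundary G T : ℝ)
      = ∑ u, ∑ v, adjWeight G u v * (if u ∈ T ∧ v ∉ T then 1 else 0) := by
    rw [edgeBoundary, Finset.card_filter, ← Fintype.sum_prod_type']
    push_cast
    refine Finset.sum_congr rfl fun p _ => ?_
    simp only [adjWeight]
    split_ifs <;> simp_all
  have hb' : (edgeBoundary G T : ℝ)
      = ∑ u, ∑ v, adjWeight G u v * (if v ∈ T ∧ u ∉ T then 1 else 0) := by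
    rw [hb, Finset.sum_comm]
    simp only [adjWeight_comm]
  rw [two_mul]
  nth_rw 1 [hb]
  rw [hb']
  simp only [← Finset.sum_add_distrib, ← mul_add]
  refine Finset.sum_congr rfl fun u _ => Finset.sum_congr rfl fun v _ => ?_
  by_cases hu : u ∈ T <;> by_cases hv : v ∈ T <;> simp [hu, hv]

lemma energy_indicator (T : Finset V) :
    energy G (fun v => if v ∈ T then 1 else 0) = 2 * edgeBoundary G T := by
  rw [← sum_abs_indicator, energy]
  refine Finset.sum_congr rfl fun u _ => Finset.sum_congr rfl fun v _ => ?_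
  by_cases hu : u ∈ T <;> by_cases hv : v ∈ T <;> simp [hu, hv]

lemma degNormSq_indicator (T : Finset V) :
    degNormSq G (fun v => if v ∈ T then 1 else 0) = vol G T := by
  simp [degNormSq, vol]

/-- A discrete co-area inequality: an isoperimetric bound on the subsets of `S` passes to
nonnegative functions vanishing off `S`. The function is peeled into level sets: subtracting its
least positive value `m` on its support `T` splits off `m` times the indicator of `T`, additively
in both sums, and shrinks the support. -/
lemma coarea {S : Finset V} {c : ℝ}
    (hc : ∀ T : Finset V, T.Nonempty → T ⊆ S → c * vol G T ≤ edgeBoundary G T)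
    (h : V → ℝ) (h0 : ∀ v, 0 ≤ h v) (hS : ∀ v, v ∉ S → h v = 0) :
    2 * c * ∑ u, (G.degree u : ℝ) * h u ≤ ∑ u, ∑ v, adjWeight G u v * |h u - h v| := by
  induction hn : (Finset.univ.filter fun v => h v ≠ 0).card using Nat.strong_induction_on
    generalizing h with
  | _ n ih =>
  set T := Finset.univ.filter fun v => h v ≠ 0 with hT
  have hmem : ∀ v, v ∈ T ↔ h v ≠ 0 := fun v => by simp [hT]
  rcases T.eq_empty_or_nonempty with hTe | hTne
  · have hz : ∀ v, h v = 0 := fun v => by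
      by_contra hv
      simpa [hTe] using (hmem v).2 hv
    simp [hz]
  obtain ⟨w, hwT, hw⟩ := Finset.exists_min_image T h hTne
  have hTS : T ⊆ S := fun v hv => by
    by_contra hvS
    exact (hmem v).1 hv (hS v hvS)
  set m := h w
  have hm : 0 ≤ m := h0 w
  set k : V → ℝ := fun v => h v - m * (if v ∈ T then 1 else 0) with hk
  have hkT : ∀ v, v ∈ T → k v = h v - m := fun v hv => by simp [hk, hv]
  have hkT' : ∀ v, v ∉ T → k v = 0 ∧ h v = 0 := fun v hv => by
    have : h v = 0 := by by_contra h'; exact hv ((hmem v).2 h')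
    simp [hk, hv, this]
  have hk0 : ∀ v, 0 ≤ k v := fun v => by
    by_cases hv : v ∈ T
    · rw [hkT v hv]; linarith [hw v hv]
    · exact (hkT' v hv).1.ge
  have hkS : ∀ v, v ∉ S → k v = 0 := fun v hv => (hkT' v fun hvT => hv (hTS hvT)).1
  have hlt : (Finset.univ.filter fun v => k v ≠ 0).card < n := by
    rw [← hn]
    refine Finset.card_lt_card ⟨fun v hv => ?_, fun hsub => ?_⟩
    · by_contra hvT
      exact (Finset.mem_filter.1 hv).2 (hkT' v hvT).1
    · exact (Finset.mem_filter.1 (hsub hwT)).2 (by rw [hkT w hwT]; exact sub_self _)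
  have hih := ih _ hlt k hk0 hkS rfl
  have hbd := mul_le_mul_of_nonneg_left (hc T hTne hTS) hm
  have hind := sum_abs_indicator G T
  have hleft : ∑ u, (G.degree u : ℝ) * h u
      = ∑ u, (G.degree u : ℝ) * k u + m * vol G T := by
    rw [← degNormSq_indicator, degNormSq, Finset.mul_sum, ← Finset.sum_add_distrib]
    refine Finset.sum_congr rfl fun u _ => ?_
    by_cases hu : u ∈ T
    · simp [hk, hu]; ring
    · simp [hk, hu]
  have hright : ∑ u, ∑ v, adjWeight G u v * |h u - h v|
      = ∑ u, ∑ v, adjWeight G u v * |k u - k v| + m * (2 * edgeBoundary G T) := by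
    rw [← hind]
    simp only [Finset.mul_sum, ← Finset.sum_add_distrib]
    refine Finset.sum_congr rfl fun u _ => Finset.sum_congr rfl fun v _ => ?_
    by_cases hu : u ∈ T <;> by_cases hv : v ∈ T
    · simp [hkT, hu, hv]
    · have := hk0 u
      rw [hkT u hu] at this
      rw [hkT u hu, (hkT' v hv).1, (hkT' v hv).2]
      simp only [hu, hv, if_true, if_false, sub_zero, abs_one, abs_of_nonneg (h0 u),
        abs_of_nonneg this]
      ring
    · have := hk0 v
      rw [hkT v hv] at this
      rw [hkT v hv, (hkT' u hu).1, (hkT' u hu).2]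
      simp only [hu, hv, if_true, if_false, zero_sub, abs_neg, abs_one, abs_of_nonneg (h0 v),
        abs_of_nonneg this]
      ring
    · simp [hkT' u hu, hkT' v hv, hu, hv]
  rw [hleft, hright]
  linarith

/-- Co-area and Cauchy–Schwarz combined. `energy` counts each edge twice, so this is the bound
`c² / 2` on the Rayleigh quotient. -/
lemma cheeger_lower {S : Finset V} {c : ℝ} (hc0 : 0 ≤ c)
    (hc : ∀ T : Finset V, T.Nonempty → T ⊆ S → c * vol G T ≤ edgeBoundary G T)
    (f : V → ℝ) (hS : ∀ v, v ∉ S → f v = 0) :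
    c ^ 2 * degNormSq G f ≤ energy G f := by
  have h1 := coarea G hc (fun v => f v ^ 2) (fun v => sq_nonneg _)
    (fun v hv => by simp [hS v hv])
  have h2 := sq_sum_abs_le G f
  have hN := degNormSq_nonneg G f
  have h3 : (2 * c * degNormSq G f) ^ 2 ≤ energy G f * (4 * degNormSq G f) :=
    (pow_le_pow_left₀ (by positivity) h1 2).trans h2
  rcases hN.eq_or_lt with hN | hN
  · rw [← hN, mul_zero]; exact energy_nonneg G f
  · refine le_of_mul_le_mul_right ?_ (by positivity : 0 < 4 * degNormSq G f)
    linarith [h3]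

end Energy

/-! ### The Dirichlet eigenvalue -/

section Dirichlet

variable {V : Type*} [Fintype V] [DecidableEq V] (G : SimpleGraph V) [DecidableRel G.Adj]

lemma dirichletMatrix_isHermitian (S : Finset V) : (dirichletMatrix G S).IsHermitian := by
  ext i j
  simp only [Matrix.conjTranspose_apply, star_trivial, dirichletMatrix, G.adj_comm j.1 i.1]
  by_cases h : (i : V) = j
  · rw [h]
  · rw [if_neg h, if_neg (Ne.symm h)]; ring

lemma dotProduct_sqrt_degree {S : Finset V} (f : V → ℝ) (hf : ∀ v, v ∉ S → f v = 0) :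
    (fun v : S => √(G.degree v.1) * f v) ⬝ᵥ (fun v : S => √(G.degree v.1) * f v)
      = degNormSq G f := by
  simp only [dotProduct, degNormSq]
  rw [Finset.sum_coe_sort S (fun v => √(G.degree v) * f v * (√(G.degree v) * f v))]
  rw [← Finset.sum_subset (Finset.subset_univ S) (fun v _ hv => by simp [hf v hv])]
  refine Finset.sum_congr rfl fun v _ => ?_
  rw [mul_mul_mul_comm, Real.mul_self_sqrt (Nat.cast_nonneg _)]; ring

/-- In the coordinates `x = D^{1/2} f`, the quadratic form of `L_S` is half the energy of `f`
extended by zero. -/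
lemma dotProduct_dirichletMatrix (hdeg : ∀ v, 0 < G.degree v) {S : Finset V} (f : V → ℝ)
    (hf : ∀ v, v ∉ S → f v = 0) :
    (fun v : S => √(G.degree v.1) * f v) ⬝ᵥ
        (dirichletMatrix G S *ᵥ (fun v : S => √(G.degree v.1) * f v)) = energy G f / 2 := by
  have hs : ∀ v, √(G.degree v : ℝ) ≠ 0 := fun v =>
    (Real.sqrt_pos.2 (Nat.cast_pos.2 (hdeg v))).ne'
  have hterm : (fun v : S => √(G.degree v.1) * f v) ⬝ᵥ
        (dirichletMatrix G S *ᵥ (fun v : S => √(G.degree v.1) * f v))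
      = ∑ i : S, ∑ j : S, f i * ((if (i : V) = j then (G.degree i.1 : ℝ) else 0)
          - adjWeight G i j) * f j := by
    simp only [dotProduct, Matrix.mulVec, Finset.mul_sum, dirichletMatrix, adjWeight]
    refine Finset.sum_congr rfl fun i _ => Finset.sum_congr rfl fun j _ => ?_
    have hi := hs i
    have hj := hs j
    field_simp
  have hext : ∀ F : V → ℝ, (∀ v, v ∉ S → F v = 0) → ∑ i : S, F i = ∑ v, F v := fun F hF => by
    rw [Finset.sum_coe_sort S F]
    exact Finset.sum_subset (Finset.subset_univ S) fun v _ hv => hF v hv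
  rw [hterm, hext (fun i => ∑ j : S, f i * ((if i = j then (G.degree i : ℝ) else 0)
          - adjWeight G i j) * f j) (fun v hv => by simp [hf v hv])]
  have hin : ∀ i : V, ∑ j : S, f i * ((if i = (j : V) then (G.degree i : ℝ) else 0)
      - adjWeight G i j) * f j = (G.degree i : ℝ) * f i ^ 2
        - ∑ j, f i * adjWeight G i j * f j := fun i => by
    rw [hext (fun j => f i * ((if i = j then (G.degree i : ℝ) else 0)
      - adjWeight G i j) * f j) (fun v hv => by simp [hf v hv])]
    simp only [mul_sub, sub_mul, Finset.sum_sub_distrib]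
    simp only [mul_ite, ite_mul, mul_zero, zero_mul, Finset.sum_ite_eq, Finset.mem_univ, if_true]
    ring
  simp only [hin, Finset.sum_sub_distrib]
  rw [energy_eq, degNormSq]; ring

/-- Variational characterization of `λ_S`, over functions on `V` vanishing off `S`. -/
lemma le_dirichletEig_iff (hdeg : ∀ v, 0 < G.degree v) {S : Finset V} (hS : S.Nonempty) (c : ℝ) :
    c ≤ dirichletEig G S ↔
      ∀ f : V → ℝ, (∀ v, v ∉ S → f v = 0) → c * degNormSq G f ≤ energy G f / 2 := by
  have : Nonempty S := hS.to_subtype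
  rw [dirichletEig, le_sInf_spectrum_iff (dirichletMatrix_isHermitian G S)]
  constructor
  · intro h f hf
    rw [← dotProduct_dirichletMatrix G hdeg f hf, ← dotProduct_sqrt_degree G f hf]
    exact h _
  · intro h x
    set f : V → ℝ := fun v => if hv : v ∈ S then (√(G.degree v : ℝ))⁻¹ * x ⟨v, hv⟩ else 0 with hfd
    have hf : ∀ v, v ∉ S → f v = 0 := fun v hv => by simp [hfd, hv]
    have hx : x = fun v : S => √(G.degree v.1) * f v := by
      funext v
      have hv : √(G.degree v.1 : ℝ) ≠ 0 := (Real.sqrt_pos.2 (Nat.cast_pos.2 (hdeg v))).ne'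
      simp [hfd, mul_inv_cancel_left₀ hv]
    rw [hx, dotProduct_dirichletMatrix G hdeg f hf, dotProduct_sqrt_degree G f hf]
    exact h f hf

lemma vol_pos (hdeg : ∀ v, 0 < G.degree v) {T : Finset V} (hT : T.Nonempty) : 0 < vol G T :=
  Finset.sum_pos (fun v _ => hdeg v) hT

/-- The volume bound makes `vol(T)` the smaller side for every `T ⊆ S`. -/
lemma cheegerRatio_eq {S T : Finset V} (hTS : T ⊆ S)
    (hvol : (vol G S : ℝ) ≤ (vol G Finset.univ : ℝ) / 2) :
    cheegerRatio G T = edgeBoundary G T / vol G T := by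
  have h1 : (vol G T : ℝ) ≤ vol G S := by
    exact_mod_cast Finset.sum_le_sum_of_subset hTS
  have h2 : (vol G T : ℝ) + vol G Tᶜ = vol G Finset.univ := by
    exact_mod_cast Finset.sum_add_sum_compl T fun v => G.degree v
  rw [cheegerRatio, min_eq_left (by linarith)]

end Dirichlet

/-- The local Cheeger inequality: for `S` nonempty with `vol(S) ≤ vol(G)/2`,
`(1/2)·Φ*(S)² ≤ λ_S ≤ Φ*(S)`. -/
theorem local_cheeger_inequality {V : Type*} [Fintype V] [DecidableEq V] (G : SimpleGraph V)
    [DecidableRel G.Adj] (hdeg : ∀ v, 0 < G.degree v) (S : Finset V) (hS : S.Nonempty)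
    (hvol : (vol G S : ℝ) ≤ (vol G Finset.univ : ℝ) / 2) :
    (1 / 2 : ℝ) * (localCheeger G S) ^ 2 ≤ dirichletEig G S ∧
      dirichletEig G S ≤ localCheeger G S := by
  have hlow : ∀ x ∈ {x : ℝ | ∃ T : Finset V, T.Nonempty ∧ T ⊆ S ∧ x = cheegerRatio G T},
      0 ≤ x := by
    rintro x ⟨T, _, _, rfl⟩
    unfold cheegerRatio
    positivity
  constructor
  · have hc0 : 0 ≤ localCheeger G S := Real.sInf_nonneg hlow
    have hc : ∀ T : Finset V, T.Nonempty → T ⊆ S →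
        localCheeger G S * vol G T ≤ edgeBoundary G T := fun T hT hTS => by
      rw [← le_div_iff₀ (Nat.cast_pos.2 (vol_pos G hdeg hT)), ← cheegerRatio_eq G hTS hvol]
      exact csInf_le ⟨0, hlow⟩ ⟨T, hT, hTS, rfl⟩
    rw [le_dirichletEig_iff G hdeg hS]
    intro f hf
    linarith [cheeger_lower G hc0 hc f hf]
  · refine le_csInf ⟨_, S, hS, Finset.Subset.refl S, rfl⟩ ?_
    rintro x ⟨T, hT, hTS, rfl⟩
    have h := (le_dirichletEig_iff G hdeg hS _).1 le_rfl
      (fun v => if v ∈ T then 1 else 0) (fun v hv => if_neg fun hvT => hv (hTS hvT))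
    rw [energy_indicator, degNormSq_indicator] at h
    rw [cheegerRatio_eq G hTS hvol, le_div_iff₀ (Nat.cast_pos.2 (vol_pos G hdeg hT))]
    linarith
end

section
/- (Claim 1) Let G = (V,E) be a finite undirected simple graph in which every vertex has positive degree, and let f : V → ℝ. Let S_i be a segment of the sweep over f, i.e. the set of the first i vertices in an ordering v_1, v_2, … of the support of f with f(v_1)/d_{v_1} ≥ f(v_2)/d_{v_2} ≥ ⋯, and suppose f(v) > 0 for every v ∈ S_i. Let x = vol(S_i). Then f(x) = ∑_{u∈S_i} f(u) = f(S_i), i.e. the maximum over sets T of ordered vertex pairs with |T| = x of ∑_{(u,v)∈T} f(u,v) equals the total f-mass of S_i. -/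
/-!
The maximum is attained at the set `segPairs G S` of all adjacent ordered pairs whose first
vertex lies in `S`. It has exactly `vol G S` elements, and each `u ∈ S` contributes
`dᵤ · f(u)/dᵤ = f(u)` to its sum. Every pair in it has value at least that of every pair outside
it: an outside pair is either non-adjacent or starts at a zero of `f`, and has value `0`, or
starts at a support vertex outside `S`, where the segment condition applies. An exchange argument
(`sum_le_sum_of_dominates`) then shows that no set of the same size has a larger sum.
-/

open Matrix Finset

/-- `f(u,v) = f(u)/dᵤ` if `u ∼ v`, and `0` otherwise. -/
noncomputable def fpair {V : Type*} [Fintype V] (G : SimpleGraph V) [DecidableRel G.Adj]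
    (f : V → ℝ) (p : V × V) : ℝ :=
  if G.Adj p.1 p.2 then f p.1 / (G.degree p.1 : ℝ) else 0

/-- The pair-maximum function: `f(x) = max_{T ⊆ V×V, |T| = x} ∑_{(u,v)∈T} f(u,v)`. -/
noncomputable def pairMax {V : Type*} [Fintype V] (G : SimpleGraph V) [DecidableRel G.Adj]
    (f : V → ℝ) (x : ℕ) : ℝ :=
  sSup {y : ℝ | ∃ T : Finset (V × V), T.card = x ∧ y = ∑ p ∈ T, fpair G f p}

/-- `T` is a segment of the sweep over `f`: a set of the first `i` vertices in an ordering
`v_1, v_2, …` of the support of `f` with `f(v_1)/d_{v_1} ≥ f(v_2)/d_{v_2} ≥ ⋯`.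
Equivalently, `T` lies in the support of `f` and every vertex of `T` has
probability-per-degree at least that of every support vertex outside `T`. -/
def IsSegment {V : Type*} [Fintype V] (G : SimpleGraph V) [DecidableRel G.Adj]
    (f : V → ℝ) (T : Finset V) : Prop :=
  (∀ u ∈ T, f u ≠ 0) ∧
    ∀ u ∈ T, ∀ v, f v ≠ 0 → v ∉ T → f v / (G.degree v : ℝ) ≤ f u / (G.degree u : ℝ)

/-- If every value of `g` on `A` is at least every value of `g` off `A`, then `A` maximizes
the sum of `g` among finite sets of its size. -/
lemma sum_le_sum_of_dominates {α : Type*} [DecidableEq α] (g : α → ℝ) (A T : Finset α)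
    (hcard : T.card = A.card) (h : ∀ p ∈ A, ∀ q, q ∉ A → g q ≤ g p) :
    ∑ p ∈ T, g p ≤ ∑ p ∈ A, g p := by
  have hc : (T \ A).card = (A \ T).card := Finset.card_sdiff_comm hcard
  have hT := Finset.sum_inter_add_sum_sdiff T A g
  have hA := Finset.sum_inter_add_sum_sdiff A T g
  rw [Finset.inter_comm] at hA
  suffices hs : ∑ p ∈ T \ A, g p ≤ ∑ p ∈ A \ T, g p by linarith
  rcases (A \ T).eq_empty_or_nonempty with he | hne
  · rw [he, Finset.card_empty, Finset.card_eq_zero] at hc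
    rw [he, hc]
  · -- The least value of `g` on `A \ T` separates the two sums.
    obtain ⟨m, hm, hmin⟩ := Finset.exists_min_image (A \ T) g hne
    calc ∑ p ∈ T \ A, g p ≤ (T \ A).card • g m :=
          Finset.sum_le_card_nsmul _ _ _ fun q hq =>
            h m (Finset.mem_sdiff.1 hm).1 q (Finset.mem_sdiff.1 hq).2
      _ = (A \ T).card • g m := by rw [hc]
      _ ≤ ∑ p ∈ A \ T, g p := Finset.card_nsmul_le_sum _ _ _ hmin

/-- The ordered pairs `(u, v)` with `u ∈ S` and `u ∼ v`. -/
def segPairs {V : Type*} [Fintype V] (G : SimpleGraph V) [DecidableRel G.Adj]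
    (S : Finset V) : Finset (V × V) :=
  (S ×ˢ Finset.univ).filter fun p => G.Adj p.1 p.2

lemma mem_segPairs {V : Type*} [Fintype V] (G : SimpleGraph V) [DecidableRel G.Adj]
    (S : Finset V) (p : V × V) : p ∈ segPairs G S ↔ p.1 ∈ S ∧ G.Adj p.1 p.2 := by
  simp [segPairs]

lemma card_segPairs {V : Type*} [Fintype V] (G : SimpleGraph V) [DecidableRel G.Adj]
    (S : Finset V) : (segPairs G S).card = vol G S := by
  rw [segPairs, Finset.card_filter, Finset.sum_product, vol]
  refine Finset.sum_congr rfl fun u _ => ?_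
  rw [← Finset.card_filter, ← G.card_neighborFinset_eq_degree, G.neighborFinset_eq_filter]

lemma sum_segPairs {V : Type*} [Fintype V] (G : SimpleGraph V) [DecidableRel G.Adj]
    (hdeg : ∀ v, 0 < G.degree v) (f : V → ℝ) (S : Finset V) :
    ∑ p ∈ segPairs G S, fpair G f p = ∑ u ∈ S, f u := by
  rw [segPairs, Finset.sum_filter, Finset.sum_product]
  refine Finset.sum_congr rfl fun u _ => ?_
  have hd : (G.degree u : ℝ) ≠ 0 := by exact_mod_cast (hdeg u).ne'
  have h1 : ∀ v, (if G.Adj u v then fpair G f (u, v) else 0)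
      = if G.Adj u v then f u / (G.degree u : ℝ) else 0 := by
    intro v
    by_cases h : G.Adj u v <;> simp [fpair, h]
  simp only [h1]
  rw [← Finset.sum_filter, ← G.neighborFinset_eq_filter, Finset.sum_const,
    G.card_neighborFinset_eq_degree, nsmul_eq_mul]
  field_simp

/-- Claim 1: if `S` is a segment of the sweep over `f` with `f > 0` on `S`, and
`x = vol(S)`, then `f(x) = ∑_{u∈S} f(u) = f(S)`. -/
theorem pairMax_vol_segment {V : Type*} [Fintype V] [DecidableEq V] (G : SimpleGraph V)
    [DecidableRel G.Adj] (hdeg : ∀ v, 0 < G.degree v) (f : V → ℝ) (S : Finset V)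
    (hseg : IsSegment G f S) (hpos : ∀ v ∈ S, 0 < f v) :
    pairMax G f (vol G S) = ∑ u ∈ S, f u := by
  refine IsGreatest.csSup_eq
    ⟨⟨segPairs G S, card_segPairs G S, (sum_segPairs G hdeg f S).symm⟩, ?_⟩
  rintro y ⟨T, hT, rfl⟩
  rw [← sum_segPairs G hdeg f S]
  refine sum_le_sum_of_dominates _ _ _ (hT.trans (card_segPairs G S).symm) fun p hp q hq => ?_
  rw [mem_segPairs] at hp hq
  have hp0 : 0 ≤ f p.1 / (G.degree p.1 : ℝ) := div_nonneg (hpos _ hp.1).le (Nat.cast_nonneg _)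
  rw [fpair, fpair, if_pos hp.2]
  by_cases hadj : G.Adj q.1 q.2
  · rw [if_pos hadj]
    by_cases h0 : f q.1 = 0
    · simpa [h0] using hp0
    · exact hseg.2 _ hp.1 _ h0 fun hS => hq ⟨hS, hadj⟩
  · rwa [if_neg hadj]
end

section
/- (Lazy-walk Lovász–Simonovits bound) Let G = (V,E) be a finite undirected simple graph in which every vertex has positive degree, let Z = (1/2)(I + P) be the lazy random walk matrix, let f : V → ℝ be any row vector, and let S ⊆ V. Then (fZ)(S) ≤ (1/2)·( f(vol(S) + |∂(S)|) + f(vol(S) − |∂(S)|) ), where f(x) denotes the pair-maximum function associated to f evaluated at the integer x. -/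
/-!
Write `A` for the set of adjacent ordered pairs `(u,v)` with `u ∈ S` and `B` for those with `v ∈ S`.
The identity part of the lazy walk contributes `f(S) = ∑_A f(u,v)` (each `u ∈ S` occurs in `dᵤ > 0`
pairs, each of weight `f(u)/dᵤ`), and the walk part contributes `(fP)(S) = ∑_B f(u,v)`. Hence
`2 (fZ)(S) = ∑_A + ∑_B = ∑_{A ∪ B} + ∑_{A ∩ B}`, and each of these two sums is at most the
pair-maximum at the cardinality of its index set. Now `A \ B` is the edge boundary of `S`, and
reversing pairs swaps `A` and `B`, so `|A| = |B| = vol S`, `|A ∪ B| = vol S + |∂S|` and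
`|A ∩ B| = vol S - |∂S|`.
-/

open Matrix Finset

/-- The transition probability matrix of a graph: `P u v = 1/dᵤ` if `u ∼ v`, else `0`. -/
noncomputable def transProb {V : Type*} [Fintype V] (G : SimpleGraph V) [DecidableRel G.Adj] :
    Matrix V V ℝ :=
  fun u v => if G.Adj u v then (1 : ℝ) / (G.degree u) else 0

/-- The lazy random walk matrix `Z = (1/2)(I + P)`. -/
noncomputable def lazyWalk {V : Type*} [Fintype V] [DecidableEq V] (G : SimpleGraph V)
    [DecidableRel G.Adj] : Matrix V V ℝ :=
  (1 / 2 : ℝ) • ((1 : Matrix V V ℝ) + transProb G)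

/-- The supremum defining `pairMax` ranges over a finite set of values, so it is an upper bound. -/
lemma sum_le_pairMax {V : Type*} [Fintype V] (G : SimpleGraph V) [DecidableRel G.Adj]
    (f : V → ℝ) (T : Finset (V × V)) : ∑ p ∈ T, fpair G f p ≤ pairMax G f T.card := by
  apply le_csSup
  · refine ((Set.finite_range (fun T : Finset (V × V) => ∑ p ∈ T, fpair G f p)).subset ?_).bddAbove
    rintro y ⟨T', -, rfl⟩
    exact ⟨T', rfl⟩
  · exact ⟨T, rfl, rfl⟩

/-- The adjacent ordered pairs whose first vertex lies in `S`. -/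
def outPairs {V : Type*} [Fintype V] [DecidableEq V] (G : SimpleGraph V) [DecidableRel G.Adj]
    (S : Finset V) : Finset (V × V) :=
  univ.filter fun p => G.Adj p.1 p.2 ∧ p.1 ∈ S

/-- The adjacent ordered pairs whose second vertex lies in `S`. -/
def inPairs {V : Type*} [Fintype V] [DecidableEq V] (G : SimpleGraph V) [DecidableRel G.Adj]
    (S : Finset V) : Finset (V × V) :=
  univ.filter fun p => G.Adj p.1 p.2 ∧ p.2 ∈ S

section
variable {V : Type*} [Fintype V] [DecidableEq V] (G : SimpleGraph V) [DecidableRel G.Adj]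
  (S : Finset V)

lemma sum_outPairs {M : Type*} [AddCommMonoid M] (g : V × V → M) :
    ∑ p ∈ outPairs G S, g p = ∑ u ∈ S, ∑ v ∈ G.neighborFinset u, g (u, v) := by
  rw [Finset.sum_sigma']
  refine Finset.sum_bij' (fun p _ => ⟨p.1, p.2⟩) (fun p _ => (p.1, p.2)) ?_ ?_ ?_ ?_ ?_ <;>
    simp +contextual [outPairs]

lemma card_outPairs : (outPairs G S).card = vol G S := by
  rw [Finset.card_eq_sum_ones, sum_outPairs]
  simp [vol]

lemma card_inPairs : (inPairs G S).card = vol G S := by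
  rw [← card_outPairs]
  refine Finset.card_bij' (fun p _ => p.swap) (fun p _ => p.swap) ?_ ?_ ?_ ?_ <;>
    simp +contextual [outPairs, inPairs, G.adj_comm]

lemma card_outPairs_sdiff : (outPairs G S \ inPairs G S).card = edgeBoundary G S := by
  unfold edgeBoundary
  congr 1
  ext p
  simp only [outPairs, inPairs, mem_sdiff, mem_filter, mem_univ, true_and]
  tauto

lemma sum_fpair_outPairs (hdeg : ∀ v, 0 < G.degree v) (f : V → ℝ) :
    ∑ p ∈ outPairs G S, fpair G f p = ∑ u ∈ S, f u := by
  rw [sum_outPairs]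
  refine Finset.sum_congr rfl fun u _ => ?_
  have hd : (G.degree u : ℝ) ≠ 0 := by exact_mod_cast (hdeg u).ne'
  have hc : ∀ v ∈ G.neighborFinset u, fpair G f (u, v) = f u / G.degree u := by
    intro v hv
    simp only [SimpleGraph.mem_neighborFinset] at hv
    simp [fpair, hv]
  rw [Finset.sum_congr rfl hc, Finset.sum_const, SimpleGraph.card_neighborFinset_eq_degree,
    nsmul_eq_mul]
  field_simp

lemma sum_fpair_inPairs (f : V → ℝ) :
    ∑ p ∈ inPairs G S, fpair G f p = ∑ v ∈ S, (f ᵥ* transProb G) v := by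
  have h : ∀ p : V × V, (if G.Adj p.1 p.2 ∧ p.2 ∈ S then fpair G f p else 0) =
      if p.2 ∈ S then f p.1 * transProb G p.1 p.2 else 0 := by
    intro p
    by_cases h1 : G.Adj p.1 p.2 <;> by_cases h2 : p.2 ∈ S <;>
      simp [h1, h2, fpair, transProb, div_eq_mul_inv]
  rw [inPairs, Finset.sum_filter, Finset.sum_congr rfl fun p _ => h p, Fintype.sum_prod_type_right]
  have hS : ∑ v ∈ S, (f ᵥ* transProb G) v = ∑ v, if v ∈ S then (f ᵥ* transProb G) v else 0 := by
    simp
  rw [hS]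
  refine Finset.sum_congr rfl fun v _ => ?_
  split_ifs <;> simp [Matrix.vecMul, dotProduct]

end

/-- The Lovász–Simonovits bound for the lazy walk:
`(fZ)(S) ≤ (1/2)(f(vol(S) + |∂(S)|) + f(vol(S) − |∂(S)|))`. -/
theorem lazyWalk_lovasz_simonovits {V : Type*} [Fintype V] [DecidableEq V] (G : SimpleGraph V)
    [DecidableRel G.Adj] (hdeg : ∀ v, 0 < G.degree v) (f : V → ℝ) (S : Finset V) :
    ∑ v ∈ S, (f ᵥ* lazyWalk G) v ≤
      (1 / 2 : ℝ) * (pairMax G f (vol G S + edgeBoundary G S) +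
        pairMax G f (vol G S - edgeBoundary G S)) := by
  have hlin : ∑ v ∈ S, (f ᵥ* lazyWalk G) v =
      (1 / 2 : ℝ) * (∑ p ∈ outPairs G S, fpair G f p + ∑ p ∈ inPairs G S, fpair G f p) := by
    rw [sum_fpair_outPairs G S hdeg f, sum_fpair_inPairs, ← Finset.sum_add_distrib, Finset.mul_sum]
    refine Finset.sum_congr rfl fun v _ => ?_
    simp [lazyWalk, Matrix.vecMul_smul, Matrix.vecMul_add, mul_add]
  have hdiff := card_outPairs_sdiff G S
  have hsplit := Finset.card_sdiff_add_card_inter (outPairs G S) (inPairs G S)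
  have hui := Finset.card_union_add_card_inter (outPairs G S) (inPairs G S)
  rw [card_outPairs] at hsplit
  rw [card_outPairs, card_inPairs] at hui
  have hU : (outPairs G S ∪ inPairs G S).card = vol G S + edgeBoundary G S := by omega
  have hI : (outPairs G S ∩ inPairs G S).card = vol G S - edgeBoundary G S := by omega
  rw [hlin, ← Finset.sum_union_inter, ← hU, ← hI]
  gcongr <;> exact sum_le_pairMax G f _
end
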